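/- Let s > −1, let b be a bounded measurable function on the unit ball B_N, and let h be continuous on the closed ball \overline{B_N}. Then T_b T_h − T_{bh} is a compact operator on the weighted Bergman space A^2_s(B_N). -/

import Mathlib

open Filter MeasureTheory Metric Set
open scoped ComplexInnerProductSpace Topology

noncomputable section

/-- Borel measurable structure on `ℂ^N`. -/
instance (N : ℕ) : MeasurableSpace (EuclideanSpace ℂ (Fin N)) := borel _

instance (N : ℕ) : BorelSpace (EuclideanSpace ℂ (Fin N)) := ⟨rfl⟩

/-- The open unit ball `B_N` of `ℂ^N`. -/
abbrev Ball (N : ℕ) : Set (EuclideanSpace ℂ (Fin N)) := Metric.ball 0 1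

/-- The normalized volume measure `v` on the unit ball of `ℂ^N`. -/
def ballMeasure (N : ℕ) : Measure (EuclideanSpace ℂ (Fin N)) :=
  (volume (Ball N))⁻¹ • volume.restrict (Ball N)

/-- The normalized surface measure `σ` on the unit sphere `∂B_N`, realized as a measure on
`ℂ^N` (supported on the sphere): it is the push-forward of the normalized volume measure of
the ball under the radial projection `z ↦ z/‖z‖`. -/
def sphereMeasure (N : ℕ) : Measure (EuclideanSpace ℂ (Fin N)) :=
  Measure.map (fun z => ‖z‖⁻¹ • z) (ballMeasure N)

/-- The weighted measure `dv_s(z) = (Γ(N+s+1)/(N! Γ(s+1))) (1-|z|²)^s dv(z)` defining the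
weighted Bergman space `A²_s(B_N)`. -/
def bergmanMeasure (N : ℕ) (s : ℝ) : Measure (EuclideanSpace ℂ (Fin N)) :=
  (ballMeasure N).withDensity fun z =>
    ENNReal.ofReal (Real.Gamma (N + s + 1) / (Nat.factorial N * Real.Gamma (s + 1))
      * (1 - ‖z‖ ^ 2) ^ s)

/-- An abstract presentation of the Hardy space `H²(B_N)` (for `t = N`, `μ` the normalized
surface measure on the sphere) or of the weighted Bergman space `A²_s(B_N)` (for
`t = N + s + 1`, `μ` the weighted volume measure `dv_s`): a reproducing-kernel Hilbert space
of holomorphic functions on `B_N` with kernel `K_w(z) = (1 - ⟨z,w⟩)^{-t}`, whose inner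
product is computed by the (dilated) integral pairing against `μ`. -/
structure BallFunctionSpace (N : ℕ) (t : ℝ) (μ : Measure (EuclideanSpace ℂ (Fin N))) where
  (H : Type)
  [grp : NormedAddCommGroup H]
  [ips : InnerProductSpace ℂ H]
  [cpl : CompleteSpace H]
  eval : H → EuclideanSpace ℂ (Fin N) → ℂ
  eval_add : ∀ f g : H, ∀ z, eval (f + g) z = eval f z + eval g z
  eval_smul : ∀ (c : ℂ) (f : H) (z : EuclideanSpace ℂ (Fin N)), eval (c • f) z = c * eval f z
  holo : ∀ f : H, DifferentiableOn ℂ (eval f) (Ball N)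
  eval_injective : ∀ f g : H, (∀ z ∈ Ball N, eval f z = eval g z) → f = g
  kernel : EuclideanSpace ℂ (Fin N) → H
  eval_kernel : ∀ w ∈ Ball N, ∀ z ∈ Ball N, eval (kernel w) z = (1 - ⟪w, z⟫) ^ (-(t : ℂ))
  reproducing : ∀ (f : H), ∀ w ∈ Ball N, ⟪kernel w, f⟫ = eval f w
  inner_eq : ∀ f g : H,
    Tendsto (fun r : ℝ => ∫ z, (starRingEnd ℂ) (eval f (r • z)) * eval g (r • z) ∂μ)
      (𝓝[<] (1 : ℝ)) (𝓝 ⟪f, g⟫)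

attribute [instance] BallFunctionSpace.grp BallFunctionSpace.ips BallFunctionSpace.cpl

/-- `T` is the composition operator `C_φ : f ↦ f ∘ φ` on `S`. -/
def BallFunctionSpace.IsCompositionOperator {N : ℕ} {t : ℝ}
    {μ : Measure (EuclideanSpace ℂ (Fin N))} (S : BallFunctionSpace N t μ)
    (φ : EuclideanSpace ℂ (Fin N) → EuclideanSpace ℂ (Fin N)) (T : S.H →L[ℂ] S.H) : Prop :=
  ∀ f : S.H, ∀ z ∈ Ball N, S.eval (T f) z = S.eval f (φ z)

/-- `T` is the Toeplitz operator `T_b : u ↦ P(b·u)` with symbol `b` on `S`;  equivalently,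
`⟪v, T u⟫ = lim_{r→1⁻} ∫ conj(v(rz)) b(z) u(rz) dμ(z)` for all `u, v ∈ S`. -/
def BallFunctionSpace.IsToeplitzOperator {N : ℕ} {t : ℝ}
    {μ : Measure (EuclideanSpace ℂ (Fin N))} (S : BallFunctionSpace N t μ)
    (b : EuclideanSpace ℂ (Fin N) → ℂ) (T : S.H →L[ℂ] S.H) : Prop :=
  ∀ u v : S.H,
    Tendsto (fun r : ℝ => ∫ z, (starRingEnd ℂ) (S.eval v (r • z)) * b z * S.eval u (r • z) ∂μ)
      (𝓝[<] (1 : ℝ)) (𝓝 ⟪v, T u⟫)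


namespace ToeplitzAux

open ContinuousLinearMap

variable {N : ℕ} {t : ℝ} {μ : Measure (EuclideanSpace ℂ (Fin N))}

lemma norm_inner_le_left {w z : EuclideanSpace ℂ (Fin N)} (hz : ‖z‖ ≤ 1) : ‖⟪w, z⟫‖ ≤ ‖w‖ :=
  (norm_inner_le_norm w z).trans (mul_le_of_le_one_right (norm_nonneg _) hz)

lemma re_pos_of_norm_lt {x : ℂ} (hx : ‖x‖ < 1) : 0 < (1 - x).re := by
  have := Complex.re_le_norm x
  simp only [Complex.sub_re, Complex.one_re]
  linarith

lemma slit_of_norm_lt {x : ℂ} (hx : ‖x‖ < 1) : (1 - x) ∈ Complex.slitPlane :=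
  Or.inl (re_pos_of_norm_lt hx)

lemma cpow_bound {x : ℂ} {a τ : ℝ} (ha : a < 1) (hx : ‖x‖ ≤ a) (hτ : 0 ≤ τ) :
    ‖(1 - x) ^ (-(τ : ℂ))‖ ≤ (1 - a) ^ (-τ) := by
  have h1 : 1 - a ≤ ‖1 - x‖ := by
    have := norm_sub_norm_le 1 x
    simp only [norm_one] at this
    linarith
  rw [← Complex.ofReal_neg, Complex.norm_cpow_real]
  exact Real.rpow_le_rpow_of_nonpos (by linarith) h1 (by linarith)

lemma mem_ball_iff {w : EuclideanSpace ℂ (Fin N)} : w ∈ Ball N ↔ ‖w‖ < 1 := by simp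

lemma smul_mem_ball {r : ℝ} (h0 : 0 ≤ r) (h1 : r ≤ 1) {z : EuclideanSpace ℂ (Fin N)}
    (hz : z ∈ Ball N) : r • z ∈ Ball N := by
  rw [mem_ball_iff] at *
  rw [norm_smul, Real.norm_of_nonneg h0]
  exact lt_of_le_of_lt (mul_le_of_le_one_left (norm_nonneg _) h1) hz

lemma inner_lt_one {w z : EuclideanSpace ℂ (Fin N)} (hw : w ∈ Ball N) (hz : z ∈ Ball N) :
    ‖⟪w, z⟫‖ < 1 :=
  (norm_inner_le_left (mem_ball_iff.1 hz).le).trans_lt (mem_ball_iff.1 hw)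

variable (S : BallFunctionSpace N t μ)

lemma inner_kernel {w z : EuclideanSpace ℂ (Fin N)} (hw : w ∈ Ball N) (hz : z ∈ Ball N) :
    ⟪S.kernel z, S.kernel w⟫ = (1 - ⟪w, z⟫) ^ (-(t : ℂ)) := by
  rw [S.reproducing _ z hz, S.eval_kernel w hw z hz]

lemma norm_kernel_sq_le (ht : 0 ≤ t) {w : EuclideanSpace ℂ (Fin N)} (hw : w ∈ Ball N) :
    ‖S.kernel w‖ ^ 2 ≤ (1 - ‖w‖) ^ (-t) := by
  have h := inner_kernel S hw hw
  have h2 : ‖⟪S.kernel w, S.kernel w⟫‖ = ‖S.kernel w‖ ^ 2 := by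
    rw [inner_self_eq_norm_sq_to_K]; simp
  rw [← h2, h]
  exact cpow_bound (mem_ball_iff.1 hw) (norm_inner_le_left (mem_ball_iff.1 hw).le) ht

lemma zero_mem : (0 : EuclideanSpace ℂ (Fin N)) ∈ Ball N := by simp

lemma ae_ball (hμ : μ (Ball N)ᶜ = 0) : ∀ᵐ z ∂μ, z ∈ Ball N := hμ

lemma isProb {t : ℝ} (S : BallFunctionSpace N t μ) (hμ : μ (Ball N)ᶜ = 0) : IsProbabilityMeasure μ := by
  have h := S.inner_eq (S.kernel 0) (S.kernel 0)
  rw [inner_kernel S zero_mem zero_mem] at h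
  have h2 : Tendsto (fun r : ℝ => ((μ.real univ : ℝ) : ℂ)) (𝓝[<] (1 : ℝ)) (𝓝 1) := by
    have h3 : ((1 : ℂ) - ⟪(0 : EuclideanSpace ℂ (Fin N)), 0⟫) ^ (-(t : ℂ)) = 1 := by simp
    rw [h3] at h
    refine h.congr' ?_
    have : Ioo (0 : ℝ) 1 ∈ 𝓝[<] (1 : ℝ) := Ioo_mem_nhdsLT (by norm_num)
    filter_upwards [this] with r hr
    rw [integral_congr_ae (g := fun _ => (1 : ℂ))]
    · simp
    · filter_upwards [ae_ball hμ] with z hz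
      rw [S.eval_kernel 0 zero_mem _ (smul_mem_ball hr.1.le hr.2.le hz)]
      simp
  have h4 : μ.real univ = 1 := by
    have := tendsto_nhds_unique tendsto_const_nhds h2
    exact_mod_cast this
  constructor
  rw [Measure.real, ENNReal.toReal_eq_one_iff] at h4
  exact h4

lemma kernel_continuousOn : ContinuousOn S.kernel (Ball N) := by
  intro w hw
  rw [ContinuousWithinAt, tendsto_iff_norm_sub_tendsto_zero]
  have key : Tendsto (fun z => ‖S.kernel z - S.kernel w‖ ^ 2) (𝓝[Ball N] w) (𝓝 0) := by
    have e : ∀ z ∈ Ball N, ((1 - ⟪z, z⟫) ^ (-(t : ℂ))).re - 2 * ((1 - ⟪w, z⟫) ^ (-(t : ℂ))).re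
        + ((1 - ⟪w, w⟫) ^ (-(t : ℂ))).re = ‖S.kernel z - S.kernel w‖ ^ 2 := by
      intro z hz
      rw [← inner_kernel S hz hz, ← inner_kernel S hw hz, ← inner_kernel S hw hw,
        @norm_sub_sq ℂ, inner_self_eq_norm_sq_to_K, inner_self_eq_norm_sq_to_K]
      norm_cast
    have hc : ContinuousWithinAt (fun z => ((1 - ⟪z, z⟫) ^ (-(t : ℂ))).re
        - 2 * ((1 - ⟪w, z⟫) ^ (-(t : ℂ))).re
        + ((1 - ⟪w, w⟫) ^ (-(t : ℂ))).re) (Ball N) w := by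
      have hs := slit_of_norm_lt (inner_lt_one hw hw)
      have h1 : ContinuousAt (fun z => ((1 - ⟪z, z⟫) ^ (-(t : ℂ)))) w :=
        ContinuousAt.cpow (by fun_prop) continuousAt_const hs
      have h2 : ContinuousAt (fun z => ((1 - ⟪w, z⟫) ^ (-(t : ℂ)))) w :=
        ContinuousAt.cpow (by fun_prop) continuousAt_const hs
      apply ContinuousAt.continuousWithinAt
      fun_prop
    have := hc.tendsto
    ring_nf at this
    refine Tendsto.congr' ?_ this
    filter_upwards [self_mem_nhdsWithin] with z hz
    rw [← e z hz]; ring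
  have := (Real.continuous_sqrt.tendsto 0).comp key
  simpa [Function.comp_def, Real.sqrt_sq] using this

lemma eq_zero_of_kernel {f : S.H} (h : ∀ w ∈ Ball N, ⟪S.kernel w, f⟫ = 0) : f = 0 := by
  refine S.eval_injective f 0 fun z hz => ?_
  rw [← S.reproducing f z hz, ← S.reproducing 0 z hz, h z hz, inner_zero_right]

lemma eq_of_kernel {f g : S.H} (h : ∀ w ∈ Ball N, ⟪S.kernel w, f⟫ = ⟪S.kernel w, g⟫) : f = g := by
  rw [← sub_eq_zero]
  refine eq_zero_of_kernel S fun w hw => ?_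
  rw [inner_sub_right, h w hw, sub_self]

lemma clm_ext {F : Type*} [NormedAddCommGroup F] [NormedSpace ℂ F] {A B : S.H →L[ℂ] F}
    (h : ∀ w ∈ Ball N, A (S.kernel w) = B (S.kernel w)) : A = B := by
  have hd : Dense ((Submodule.span ℂ (S.kernel '' Ball N) : Submodule ℂ S.H) : Set S.H) := by
    rw [Submodule.dense_iff_topologicalClosure_eq_top,
      Submodule.topologicalClosure_eq_top_iff, Submodule.eq_bot_iff]
    intro f hf
    refine eq_zero_of_kernel S fun w hw => ?_
    exact (Submodule.mem_orthogonal _ _).1 hf _ (Submodule.subset_span ⟨w, hw, rfl⟩)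
  refine ContinuousLinearMap.ext_on hd ?_
  rintro _ ⟨w, hw, rfl⟩
  exact h w hw

lemma clm_ext' {A B : S.H →L[ℂ] S.H}
    (h : ∀ u ∈ Ball N, ∀ w ∈ Ball N, ⟪S.kernel u, A (S.kernel w)⟫ = ⟪S.kernel u, B (S.kernel w)⟫) :
    A = B :=
  clm_ext S fun w hw => eq_of_kernel S fun u hu => h u hu w hw

lemma aesm_of_continuousOn (hμ : μ (Ball N)ᶜ = 0) {F : Type*} [TopologicalSpace F]
    [TopologicalSpace.PseudoMetrizableSpace F]
    {φ : EuclideanSpace ℂ (Fin N) → F} (h : ContinuousOn φ (Ball N)) :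
    AEStronglyMeasurable φ μ := by
  have : μ.restrict (Ball N) = μ := Measure.restrict_eq_self_of_ae_mem hμ
  rw [← this]
  exact h.aestronglyMeasurable measurableSet_ball

lemma eval_dil_continuousOn (f : S.H) {r : ℝ} (h0 : 0 ≤ r) (h1 : r ≤ 1) :
    ContinuousOn (fun z => S.eval f (r • z)) (Ball N) :=
  (S.holo f).continuousOn.comp (by fun_prop) fun _ hz => smul_mem_ball h0 h1 hz

lemma eval_lintegral_le (hμ : μ (Ball N)ᶜ = 0) (f : S.H) :
    ∫⁻ z, ‖S.eval f z‖ₑ ^ 2 ∂μ ≤ ENNReal.ofReal (‖f‖ ^ 2) := by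
  have hp := isProb S hμ
  obtain ⟨r, hr, hr1, hrt⟩ : ∃ r : ℕ → ℝ, (∀ n, r n ∈ Ico (0 : ℝ) 1) ∧ Tendsto r atTop (𝓝 1) ∧
      Tendsto r atTop (𝓝[<] 1) := by
    have h : Tendsto (fun n : ℕ => 1 - 1 / ((n : ℝ) + 1)) atTop (𝓝 1) := by
      simpa using tendsto_one_div_add_atTop_nhds_zero_nat.const_sub (1 : ℝ)
    have h2 : ∀ n : ℕ, 1 - 1 / ((n : ℝ) + 1) ∈ Ico (0 : ℝ) 1 := by
      intro n
      have : 0 < 1 / ((n : ℝ) + 1) := by positivity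
      have h' : 1 / ((n : ℝ) + 1) ≤ 1 := by
        rw [div_le_one (by positivity)]; linarith [(Nat.cast_nonneg n : (0 : ℝ) ≤ n)]
      constructor <;> linarith
    exact ⟨_, h2, h, tendsto_nhdsWithin_iff.2 ⟨h, Eventually.of_forall fun n => (h2 n).2⟩⟩
  have hmeas : ∀ n, AEStronglyMeasurable (fun z => S.eval f (r n • z)) μ := fun n =>
    aesm_of_continuousOn hμ (eval_dil_continuousOn S f (hr n).1 (hr n).2.le)
  have hint : ∀ n, ∫⁻ z, ‖S.eval f (r n • z)‖ₑ ^ 2 ∂μ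
      = ENNReal.ofReal (∫ z, (starRingEnd ℂ) (S.eval f (r n • z)) * S.eval f (r n • z) ∂μ).re := by
    intro n
    have hb : ∃ C, ∀ z ∈ Ball N, ‖S.eval f (r n • z)‖ ≤ C := by
      have hc : IsCompact (closedBall (0 : EuclideanSpace ℂ (Fin N)) (r n)) :=
        isCompact_closedBall _ _
      obtain ⟨C, hC⟩ := hc.exists_bound_of_continuousOn (f := S.eval f)
        ((S.holo f).continuousOn.mono (closedBall_subset_ball (hr n).2))
      refine ⟨C, fun z hz => hC _ ?_⟩
      rw [mem_closedBall_zero_iff, norm_smul, Real.norm_of_nonneg (hr n).1]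
      exact mul_le_of_le_one_right (hr n).1 (mem_ball_iff.1 hz).le
    obtain ⟨C, hC⟩ := hb
    have e : ∀ z, (starRingEnd ℂ) (S.eval f (r n • z)) * S.eval f (r n • z)
        = ((‖S.eval f (r n • z)‖ ^ 2 : ℝ) : ℂ) := by
      intro z; rw [Complex.conj_mul']; norm_cast
    simp_rw [e]
    rw [integral_complex_ofReal, Complex.ofReal_re, ofReal_integral_eq_lintegral_ofReal]
    · refine lintegral_congr fun z => ?_
      rw [ENNReal.ofReal_pow (norm_nonneg _), ofReal_norm]
    · refine Integrable.of_bound ((hmeas n).norm.pow 2) (C ^ 2) ?_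
      filter_upwards [ae_ball hμ] with z hz
      rw [norm_pow, norm_norm]
      exact pow_le_pow_left₀ (norm_nonneg _) (hC z hz) 2
    · exact Eventually.of_forall fun z => by positivity
  have hlim : Tendsto (fun n => ∫⁻ z, ‖S.eval f (r n • z)‖ₑ ^ 2 ∂μ) atTop
      (𝓝 (ENNReal.ofReal (‖f‖ ^ 2))) := by
    simp_rw [hint]
    have h := (S.inner_eq f f).comp hrt
    rw [inner_self_eq_norm_sq_to_K] at h
    have h2 := (Complex.continuous_re.tendsto _).comp h
    have h3 := (ENNReal.continuous_ofReal.tendsto _).comp h2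
    have h4 : ((((‖f‖ : ℝ) : ℂ)) ^ 2).re = ‖f‖ ^ 2 := by
      rw [← Complex.ofReal_pow, Complex.ofReal_re]
    rw [← h4]
    exact h3
  calc ∫⁻ z, ‖S.eval f z‖ₑ ^ 2 ∂μ
      = ∫⁻ z, liminf (fun n => ‖S.eval f (r n • z)‖ₑ ^ 2) atTop ∂μ := by
        refine lintegral_congr_ae ?_
        filter_upwards [ae_ball hμ] with z hz
        have hc : ContinuousAt (S.eval f) z :=
          (S.holo f).continuousOn.continuousAt (isOpen_ball.mem_nhds hz)
        have h1 : Tendsto (fun n => r n • z) atTop (𝓝 z) := by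
          simpa using hr1.smul_const z
        have h2 : Tendsto (fun n => ‖S.eval f (r n • z)‖ₑ ^ 2) atTop (𝓝 (‖S.eval f z‖ₑ ^ 2)) :=
          ((ENNReal.continuous_pow 2).tendsto _).comp ((hc.tendsto.comp h1).enorm)
        exact h2.liminf_eq.symm
    _ ≤ liminf (fun n => ∫⁻ z, ‖S.eval f (r n • z)‖ₑ ^ 2 ∂μ) atTop :=
        lintegral_liminf_le' fun n => ((hmeas n).enorm).pow_const 2
    _ = _ := hlim.liminf_eq

lemma eval_memLp (hμ : μ (Ball N)ᶜ = 0) (f : S.H) : MemLp (S.eval f) 2 μ := by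
  refine ⟨aesm_of_continuousOn hμ (S.holo f).continuousOn, ?_⟩
  rw [eLpNorm_lt_top_iff_lintegral_rpow_enorm_lt_top (by simp) (by simp)]
  simpa using (eval_lintegral_le S hμ f).trans_lt ENNReal.ofReal_lt_top

/-- The inclusion of the function space into `L²`. -/
def J (hμ : μ (Ball N)ᶜ = 0) : S.H →L[ℂ] Lp ℂ 2 μ :=
  LinearMap.mkContinuous
    { toFun := fun f => (eval_memLp S hμ f).toLp
      map_add' := fun f g => by
        rw [← MemLp.toLp_add]
        exact MemLp.toLp_congr _ _ (Eventually.of_forall fun z => S.eval_add f g z)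
      map_smul' := fun c f => by
        simp only [RingHom.id_apply]
        rw [← MemLp.toLp_const_smul]
        exact MemLp.toLp_congr _ _ (Eventually.of_forall fun z => S.eval_smul c f z) }
    1 (by
      intro f
      simp only [LinearMap.coe_mk, AddHom.coe_mk, one_mul]
      rw [Lp.norm_toLp]
      refine ENNReal.toReal_le_of_le_ofReal (norm_nonneg _) ?_
      rw [eLpNorm_eq_lintegral_rpow_enorm_toReal (by simp) (by simp)]
      simp only [ENNReal.toReal_ofNat, ENNReal.rpow_ofNat, one_div]
      have h := ENNReal.rpow_le_rpow (eval_lintegral_le S hμ f) (z := 2⁻¹) (by norm_num)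
      refine h.trans (le_of_eq ?_)
      rw [ENNReal.ofReal_pow (norm_nonneg _), ← ENNReal.rpow_natCast, ← ENNReal.rpow_mul]
      simp)

lemma J_coe (hμ : μ (Ball N)ᶜ = 0) (f : S.H) : J S hμ f =ᵐ[μ] S.eval f :=
  MemLp.coeFn_toLp (eval_memLp S hμ f)


section Mul

variable {α : Type*} [MeasurableSpace α] {ν : Measure α}

open Classical in
/-- Multiplication by an essentially bounded function on `L²`. -/
def Mul (ν : Measure α) (φ : α → ℂ) : Lp ℂ 2 ν →L[ℂ] Lp ℂ 2 ν :=
  if h : MemLp φ ⊤ ν then (ContinuousLinearMap.mul ℂ ℂ).holderL ν ⊤ 2 2 h.toLp else 0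

lemma Mul_coe {φ : α → ℂ} (h : MemLp φ ⊤ ν) (F : Lp ℂ 2 ν) :
    Mul ν φ F =ᵐ[ν] fun z => φ z * F z := by
  rw [Mul, dif_pos h]
  have h1 := (ContinuousLinearMap.mul ℂ ℂ).coeFn_holder (r := 2) h.toLp F
  filter_upwards [h1, h.coeFn_toLp] with z h1 h2
  rw [← h2]
  exact h1

lemma Mul_norm_le {φ : α → ℂ} (h : MemLp φ ⊤ ν) {C : ℝ} (hC : ∀ᵐ z ∂ν, ‖φ z‖ ≤ C)
    (F : Lp ℂ 2 ν) : ‖Mul ν φ F‖ ≤ C * ‖F‖ := by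
  refine Lp.norm_le_mul_norm_of_ae_le_mul ?_
  filter_upwards [Mul_coe h F, hC] with z h1 h2
  rw [h1, norm_mul]
  exact mul_le_mul_of_nonneg_right h2 (norm_nonneg _)

lemma Mul_inner {φ : α → ℂ} (h : MemLp φ ⊤ ν) (F G : Lp ℂ 2 ν) :
    ⟪G, Mul ν φ F⟫ = ∫ z, (starRingEnd ℂ) (G z) * φ z * F z ∂ν := by
  rw [L2.inner_def]
  refine integral_congr_ae ?_
  filter_upwards [Mul_coe h F] with z h1
  rw [h1, RCLike.inner_apply]
  ring

lemma Mul_congr {φ ψ : α → ℂ} (h : φ =ᵐ[ν] ψ) : Mul ν φ = Mul ν ψ := by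
  by_cases hφ : MemLp φ ⊤ ν
  · have hψ : MemLp ψ ⊤ ν := (memLp_congr_ae h).1 hφ
    rw [Mul, Mul, dif_pos hφ, dif_pos hψ, MemLp.toLp_congr hφ hψ h]
  · have hψ : ¬ MemLp ψ ⊤ ν := fun h' => hφ ((memLp_congr_ae h).2 h')
    rw [Mul, Mul, dif_neg hφ, dif_neg hψ]

lemma Mul_mul {φ ψ : α → ℂ} (h : MemLp φ ⊤ ν) (h' : MemLp ψ ⊤ ν) :
    Mul ν (fun z => φ z * ψ z) = Mul ν φ ∘L Mul ν ψ := by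
  have h2 : MemLp (fun z => φ z * ψ z) ⊤ ν := h'.mul h
  ext1 F
  refine Lp.ext ?_
  filter_upwards [Mul_coe h2 F, Mul_coe h (Mul ν ψ F), Mul_coe h' F] with z a1 a2 a3
  rw [ContinuousLinearMap.comp_apply, a1, a2, a3, mul_assoc]

lemma Mul_add {φ ψ : α → ℂ} (h : MemLp φ ⊤ ν) (h' : MemLp ψ ⊤ ν) :
    Mul ν (fun z => φ z + ψ z) = Mul ν φ + Mul ν ψ := by
  have h2 : MemLp (fun z => φ z + ψ z) ⊤ ν := h.add h'
  ext1 F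
  refine Lp.ext ?_
  filter_upwards [Mul_coe h2 F, Mul_coe h F, Mul_coe h' F,
    Lp.coeFn_add (Mul ν φ F) (Mul ν ψ F)] with z a1 a2 a3 a4
  rw [_root_.add_apply, a1, a4, Pi.add_apply, a2, a3, add_mul]

lemma Mul_sub {φ ψ : α → ℂ} (h : MemLp φ ⊤ ν) (h' : MemLp ψ ⊤ ν) :
    Mul ν (fun z => φ z - ψ z) = Mul ν φ - Mul ν ψ := by
  have h2 : MemLp (fun z => φ z - ψ z) ⊤ ν := h.sub h'
  ext1 F
  refine Lp.ext ?_
  filter_upwards [Mul_coe h2 F, Mul_coe h F, Mul_coe h' F,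
    Lp.coeFn_sub (Mul ν φ F) (Mul ν ψ F)] with z a1 a2 a3 a4
  rw [_root_.sub_apply, a1, a4, Pi.sub_apply, a2, a3, sub_mul]

lemma Mul_const (c : ℂ) : Mul ν (fun _ => c) = c • ContinuousLinearMap.id ℂ (Lp ℂ 2 ν) := by
  have h2 : MemLp (fun _ : α => c) ⊤ ν := memLp_top_const c
  ext1 F
  refine Lp.ext ?_
  filter_upwards [Mul_coe h2 F, Lp.coeFn_smul c F] with z a1 a2
  rw [_root_.smul_apply, a1, ContinuousLinearMap.id_apply, a2]
  rfl

lemma Mul_adjoint {φ : α → ℂ} (h : MemLp φ ⊤ ν) :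
    adjoint (Mul ν φ) = Mul ν (fun z => (starRingEnd ℂ) (φ z)) := by
  have h2 : MemLp (fun z => (starRingEnd ℂ) (φ z)) ⊤ ν := h.star
  symm
  rw [eq_adjoint_iff]
  intro F G
  rw [L2.inner_def, L2.inner_def]
  refine integral_congr_ae ?_
  filter_upwards [Mul_coe h2 F, Mul_coe h G] with z a1 a2
  rw [a1, a2, RCLike.inner_apply, RCLike.inner_apply]
  simp
  ring

end Mul

lemma J_kernel_coe (hμ : μ (Ball N)ᶜ = 0) {w : EuclideanSpace ℂ (Fin N)} (hw : w ∈ Ball N) :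
    J S hμ (S.kernel w) =ᵐ[μ] fun z => (1 - ⟪w, z⟫) ^ (-(t : ℂ)) := by
  filter_upwards [J_coe S hμ (S.kernel w), ae_ball hμ] with z h1 hz
  rw [h1, S.eval_kernel w hw z hz]

lemma cpow_continuousOn {w : EuclideanSpace ℂ (Fin N)} (hw : w ∈ Ball N) (c : ℂ) :
    ContinuousOn (fun z : EuclideanSpace ℂ (Fin N) => (1 - ⟪w, z⟫) ^ c) (Ball N) := by
  refine ContinuousOn.cpow (by fun_prop) continuousOn_const fun z hz => ?_
  exact slit_of_norm_lt (inner_lt_one hw hz)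

lemma inner_rsmul_left (r : ℝ) (w z : EuclideanSpace ℂ (Fin N)) : ⟪r • w, z⟫ = r * ⟪w, z⟫ := by
  rw [RCLike.real_smul_eq_coe_smul (K := ℂ), inner_smul_left]
  simp

lemma inner_rsmul_right (r : ℝ) (w z : EuclideanSpace ℂ (Fin N)) : ⟪w, r • z⟫ = r * ⟪w, z⟫ := by
  rw [RCLike.real_smul_eq_coe_smul (K := ℂ), inner_smul_right]
  simp

lemma dct (ht : 0 ≤ t) (hμ : μ (Ball N)ᶜ = 0) {φ : EuclideanSpace ℂ (Fin N) → ℂ}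
    (hφ : MemLp φ ⊤ μ)
    {u w : EuclideanSpace ℂ (Fin N)} (hu : u ∈ Ball N) (hw : w ∈ Ball N) :
    Tendsto (fun r : ℝ => ∫ z, (starRingEnd ℂ) (S.eval (S.kernel u) (r • z)) * φ z *
      S.eval (S.kernel w) (r • z) ∂μ) (𝓝[<] (1 : ℝ))
      (𝓝 ⟪J S hμ (S.kernel u), Mul μ φ (J S hμ (S.kernel w))⟫) := by
  have hp := isProb S hμ
  have e : ⟪J S hμ (S.kernel u), Mul μ φ (J S hμ (S.kernel w))⟫ =
      ∫ z, (starRingEnd ℂ) (S.eval (S.kernel u) z) * φ z * S.eval (S.kernel w) z ∂μ := by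
    rw [Mul_inner hφ]
    refine integral_congr_ae ?_
    filter_upwards [J_coe S hμ (S.kernel u), J_coe S hμ (S.kernel w)] with z h1 h2
    rw [h1, h2]
  rw [e]
  have hI : ∀ᶠ r in 𝓝[<] (1 : ℝ), r ∈ Ioo (0 : ℝ) 1 := Ioo_mem_nhdsLT (by norm_num)
  refine tendsto_integral_filter_of_dominated_convergence
    (fun z => (1 - ‖u‖) ^ (-t) * ‖φ z‖ * (1 - ‖w‖) ^ (-t)) ?_ ?_ ?_ ?_
  · filter_upwards [hI] with r hr
    refine AEStronglyMeasurable.mul (AEStronglyMeasurable.mul ?_ hφ.1) ?_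
    · exact aesm_of_continuousOn hμ
        (Complex.continuous_conj.comp_continuousOn (eval_dil_continuousOn S _ hr.1.le hr.2.le))
    · exact aesm_of_continuousOn hμ (eval_dil_continuousOn S _ hr.1.le hr.2.le)
  · filter_upwards [hI] with r hr
    filter_upwards [ae_ball hμ] with z hz
    have hz' := smul_mem_ball hr.1.le hr.2.le hz
    have key : ∀ v ∈ Ball N, ‖S.eval (S.kernel v) (r • z)‖ ≤ (1 - ‖v‖) ^ (-t) := by
      intro v hv
      rw [S.eval_kernel v hv _ hz']
      exact cpow_bound (mem_ball_iff.1 hv) (norm_inner_le_left (mem_ball_iff.1 hz').le) ht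
    rw [norm_mul, norm_mul, RCLike.norm_conj]
    have := key u hu
    have := key w hw
    have h3 := Real.rpow_nonneg (sub_nonneg.2 (mem_ball_iff.1 hu).le) (-t)
    gcongr
  · have h1 : Integrable (fun z => ‖φ z‖) μ := (hφ.mono_exponent le_top).integrable le_rfl |>.norm
    exact (h1.const_mul _).mul_const _
  · filter_upwards [ae_ball hμ] with z hz
    have h1 : Tendsto (fun r : ℝ => r • z) (𝓝[<] (1 : ℝ)) (𝓝 z) := by
      have : Tendsto (fun r : ℝ => r • z) (𝓝 (1 : ℝ)) (𝓝 ((1 : ℝ) • z)) :=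
        (continuous_id.smul continuous_const).tendsto _
      rw [one_smul] at this
      exact this.mono_left nhdsWithin_le_nhds
    have hc : ∀ f : S.H, Tendsto (fun r : ℝ => S.eval f (r • z)) (𝓝[<] (1 : ℝ))
        (𝓝 (S.eval f z)) := fun f =>
      (((S.holo f).continuousOn.continuousAt (isOpen_ball.mem_nhds hz)).tendsto).comp h1
    exact (((Complex.continuous_conj.tendsto _).comp (hc _)).mul_const _).mul (hc _)

lemma toeplitz_eq (ht : 0 ≤ t) (hμ : μ (Ball N)ᶜ = 0) {φ : EuclideanSpace ℂ (Fin N) → ℂ}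
    (hφ : MemLp φ ⊤ μ) {T : S.H →L[ℂ] S.H} (hT : S.IsToeplitzOperator φ T) :
    T = adjoint (J S hμ) ∘L Mul μ φ ∘L J S hμ := by
  refine clm_ext' S fun u hu w hw => ?_
  rw [ContinuousLinearMap.comp_apply, adjoint_inner_right]
  exact tendsto_nhds_unique (hT (S.kernel w) (S.kernel u)) (dct S ht hμ hφ hu hw)

lemma J_isom (ht : 0 ≤ t) (hμ : μ (Ball N)ᶜ = 0) :
    adjoint (J S hμ) ∘L J S hμ = ContinuousLinearMap.id ℂ S.H := by
  have hp := isProb S hμ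
  have h := toeplitz_eq S ht hμ (φ := fun _ => 1) (memLp_top_const 1)
    (T := ContinuousLinearMap.id ℂ S.H) (fun u v => by simpa using S.inner_eq v u)
  rw [Mul_const, one_smul, ContinuousLinearMap.id_comp] at h
  exact h.symm

lemma J_inner (ht : 0 ≤ t) (hμ : μ (Ball N)ᶜ = 0) (f g : S.H) :
    ⟪J S hμ f, J S hμ g⟫ = ⟪f, g⟫ := by
  rw [← adjoint_inner_right, ← ContinuousLinearMap.comp_apply, J_isom S ht hμ]
  rfl


/-- The (compact) dilation operator `f ↦ f(r² z)`. -/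
def C (r : ℝ) : S.H →L[ℂ] S.H :=
  ∫ z, InnerProductSpace.rankOne ℂ (S.kernel (r • z)) (S.kernel (r • z)) ∂μ

lemma rankOne_cont {H : Type*} [NormedAddCommGroup H] [InnerProductSpace ℂ H] :
    Continuous fun x : H => InnerProductSpace.rankOne ℂ x x := by
  have h : Continuous fun x : H => smulRightL ℂ H H (innerSL ℂ x) x :=
    ((smulRightL ℂ H H).continuous.comp (innerSL ℂ).continuous).clm_apply continuous_id
  exact h

lemma C_meas (hμ : μ (Ball N)ᶜ = 0) {r : ℝ} (h0 : 0 ≤ r) (h1 : r < 1) :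
    AEStronglyMeasurable
      (fun z => InnerProductSpace.rankOne ℂ (S.kernel (r • z)) (S.kernel (r • z))) μ :=
  aesm_of_continuousOn hμ (rankOne_cont.comp_continuousOn
    ((kernel_continuousOn S).comp (by fun_prop) fun _ hz => smul_mem_ball h0 h1.le hz))

lemma C_pt_bound (ht : 0 ≤ t) {r ρ : ℝ} (h0 : 0 ≤ r) (h1 : r ≤ ρ) (h2 : ρ < 1)
    {z : EuclideanSpace ℂ (Fin N)} (hz : z ∈ Ball N) :
    ‖InnerProductSpace.rankOne ℂ (S.kernel (r • z)) (S.kernel (r • z))‖ ≤ (1 - ρ) ^ (-t) := by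
  rw [InnerProductSpace.norm_rankOne, ← sq]
  refine (norm_kernel_sq_le S ht (smul_mem_ball h0 (by linarith) hz)).trans ?_
  have : ‖r • z‖ ≤ ρ := by
    rw [norm_smul, Real.norm_of_nonneg h0]
    exact (mul_le_of_le_one_right h0 (mem_ball_iff.1 hz).le).trans h1
  exact Real.rpow_le_rpow_of_nonpos (by linarith) (by linarith) (by linarith)

lemma C_int (ht : 0 ≤ t) (hμ : μ (Ball N)ᶜ = 0) {r : ℝ} (h0 : 0 ≤ r) (h1 : r < 1) :
    Integrable
      (fun z => InnerProductSpace.rankOne ℂ (S.kernel (r • z)) (S.kernel (r • z))) μ := by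
  have hp := isProb S hμ
  refine Integrable.of_bound (C_meas S hμ h0 h1) ((1 - r) ^ (-t)) ?_
  filter_upwards [ae_ball hμ] with z hz
  exact C_pt_bound S ht h0 le_rfl h1 hz

lemma C_bound (ht : 0 ≤ t) (hμ : μ (Ball N)ᶜ = 0) {r ρ : ℝ} (h0 : 0 ≤ r) (h1 : r ≤ ρ)
    (h2 : ρ < 1) : ‖C S r‖ ≤ (1 - ρ) ^ (-t) := by
  have hp := isProb S hμ
  have := norm_integral_le_of_norm_le_const (μ := μ)
    (f := fun z => InnerProductSpace.rankOne ℂ (S.kernel (r • z)) (S.kernel (r • z)))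
    (C := (1 - ρ) ^ (-t))
    (by filter_upwards [ae_ball hμ] with z hz using C_pt_bound S ht h0 h1 h2 hz)
  rw [probReal_univ, mul_one] at this
  exact this

lemma C_kernel (ht : 0 ≤ t) (hμ : μ (Ball N)ᶜ = 0) {r : ℝ} (h0 : 0 ≤ r) (h1 : r < 1)
    {w : EuclideanSpace ℂ (Fin N)} (hw : w ∈ Ball N) :
    C S r (S.kernel w) = S.kernel ((r ^ 2) • w) := by
  have hp := isProb S hμ
  refine eq_of_kernel S fun u hu => ?_
  have hru := smul_mem_ball h0 h1.le hu
  have hrw := smul_mem_ball h0 h1.le hw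
  have hrrw := smul_mem_ball (sq_nonneg r) (by nlinarith) hw
  have hint := C_int S ht hμ h0 h1
  rw [C, ContinuousLinearMap.integral_apply hint, ← integral_inner (hint.apply_continuousLinearMap _)]
  have e : ∫ z, ⟪S.kernel u, InnerProductSpace.rankOne ℂ (S.kernel (r • z)) (S.kernel (r • z))
      (S.kernel w)⟫ ∂μ = ⟪J S hμ (S.kernel (r • u)), J S hμ (S.kernel (r • w))⟫ := by
    rw [L2.inner_def]
    refine integral_congr_ae ?_
    filter_upwards [J_coe S hμ (S.kernel (r • u)), J_kernel_coe S hμ hrw, ae_ball hμ]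
      with z e1 e2 hz
    have hrz := smul_mem_ball h0 h1.le hz
    rw [e1, e2, RCLike.inner_apply, InnerProductSpace.inner_right_rankOne_apply,
      inner_kernel S hrz hu, inner_kernel S hw hrz, ← S.reproducing _ z hz,
      inner_conj_symm, inner_kernel S hz hru]
    simp only [inner_rsmul_left, inner_rsmul_right]
    ring
  rw [e, J_inner S ht, inner_kernel S hrw hru, inner_kernel S hrrw hu]
  simp only [inner_rsmul_left, inner_rsmul_right]
  congr 2
  push_cast
  ring

lemma C_norm_sq (ht : 0 ≤ t) (hμ : μ (Ball N)ᶜ = 0) {r : ℝ} (h0 : 0 ≤ r) (h1 : r < 1) :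
    ‖C S r‖ ^ 2 = ‖C S (r ^ 2)‖ := by
  rw [sq ‖C S r‖, ← norm_adjoint_comp_self]
  congr 1
  refine clm_ext' S fun u hu w hw => ?_
  have h2 : r ^ 2 < 1 := by nlinarith
  have h4 : (r ^ 2) ^ 2 < 1 := by nlinarith [sq_nonneg r]
  have hru := smul_mem_ball (sq_nonneg r) h2.le hu
  have hrw := smul_mem_ball (sq_nonneg r) h2.le hw
  rw [ContinuousLinearMap.comp_apply, adjoint_inner_right, C_kernel S ht hμ h0 h1 hu,
    C_kernel S ht hμ h0 h1 hw, C_kernel S ht hμ (sq_nonneg r) h2 hw, inner_kernel S hrw hru,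
    inner_kernel S (smul_mem_ball (sq_nonneg _) h4.le hw) hu]
  simp only [inner_rsmul_left, inner_rsmul_right]
  congr 2
  push_cast
  ring

lemma C_norm_le_one (ht : 0 ≤ t) (hμ : μ (Ball N)ᶜ = 0) {r : ℝ} (h0 : 0 ≤ r) (h1 : r < 1) :
    ‖C S r‖ ≤ 1 := by
  have key : ∀ n : ℕ, ‖C S r‖ ^ (2 ^ n) = ‖C S (r ^ (2 ^ n))‖ := by
    intro n
    induction n with
    | zero => simp
    | succ n ih =>
      rw [pow_succ, pow_mul, ih, pow_mul]
      exact C_norm_sq S ht hμ (by positivity) (pow_lt_one₀ h0 h1 (by positivity))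
  by_contra! hcon
  have hb : ∀ n : ℕ, ‖C S r‖ ^ (2 ^ n) ≤ (1 - r) ^ (-t) := fun n => by
    rw [key n]
    exact C_bound S ht hμ (by positivity) (pow_le_of_le_one h0 h1.le (by positivity)) h1
  obtain ⟨n, hn⟩ := pow_unbounded_of_one_lt ((1 - r) ^ (-t)) hcon
  have := pow_le_pow_right₀ hcon.le (Nat.lt_two_pow_self (n := n)).le
  linarith [hb n]

lemma convex_compact {H : Type*} [NormedAddCommGroup H] [NormedSpace ℂ H] :
    Convex ℝ {A : H →L[ℂ] H | IsCompactOperator A} := by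
  intro A hA B hB a b _ _ _
  exact (IsCompactOperator.smul hA a).add (IsCompactOperator.smul hB b)

lemma C_compact (ht : 0 ≤ t) (hμ : μ (Ball N)ᶜ = 0) {r : ℝ} (h0 : 0 ≤ r) (h1 : r < 1) :
    IsCompactOperator (C S r) := by
  have hp := isProb S hμ
  have hcl : IsClosed {A : S.H →L[ℂ] S.H | IsCompactOperator A} :=
    isClosed_setOfPred_isCompactOperator
  have hcv : Convex ℝ {A : S.H →L[ℂ] S.H | IsCompactOperator A} := convex_compact
  suffices h : ∀ z, InnerProductSpace.rankOne ℂ (S.kernel (r • z)) (S.kernel (r • z)) ∈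
      {A : S.H →L[ℂ] S.H | IsCompactOperator A} from
    hcv.integral_mem hcl (Eventually.of_forall h) (C_int S ht hμ h0 h1)
  intro z
  change IsCompactOperator (InnerProductSpace.rankOne ℂ (S.kernel (r • z)) (S.kernel (r • z)))
  rw [InnerProductSpace.rankOne_def']
  exact (isCompactOperator_of_locallyCompactSpace_rng
    (T := toSpanSingleton ℂ (S.kernel (r • z)))).comp_clm _

lemma C_continuousAt (ht : 0 ≤ t) (hμ : μ (Ball N)ᶜ = 0) {r : ℝ} (h0 : 0 < r) (h1 : r < 1) :
    ContinuousAt (C S) r := by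
  have hp := isProb S hμ
  have hI : ∀ᶠ x in 𝓝 r, x ∈ Ioo 0 ((1 + r) / 2) := Ioo_mem_nhds h0 (by linarith)
  refine continuousAt_of_dominated (bound := fun _ => (1 - (1 + r) / 2) ^ (-t)) ?_ ?_
    (integrable_const _) ?_
  · filter_upwards [hI] with x hx
    exact C_meas S hμ hx.1.le (by linarith [hx.2])
  · filter_upwards [hI] with x hx
    filter_upwards [ae_ball hμ] with z hz
    exact C_pt_bound S ht hx.1.le hx.2.le (by linarith) hz
  · filter_upwards [ae_ball hμ] with z hz
    have hc : ContinuousAt S.kernel (r • z) := (kernel_continuousOn S).continuousAt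
      (isOpen_ball.mem_nhds (smul_mem_ball h0.le h1.le hz))
    exact rankOne_cont.continuousAt.comp
      (ContinuousAt.comp (f := fun x : ℝ => x • z) hc (by fun_prop))


lemma prob_Ioo : IsProbabilityMeasure (volume.restrict (Ioo (0 : ℝ) 1)) := ⟨by simp⟩

/-- The compact operator with kernel `(1 - ⟪w, z⟫) ^ (1 - t)`. -/
def D : S.H →L[ℂ] S.H :=
  ∫ σ in Ioo (0 : ℝ) 1, C S (σ ^ (1 / (2 * (t - 1))))

lemma rpow_mem {c : ℝ} (hc : 0 < c) {σ : ℝ} (hσ : σ ∈ Ioo (0 : ℝ) 1) : σ ^ c ∈ Ioo (0 : ℝ) 1 :=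
  ⟨Real.rpow_pos_of_pos hσ.1 _, Real.rpow_lt_one hσ.1.le hσ.2 hc⟩

lemma D_int (ht : 1 < t) (hμ : μ (Ball N)ᶜ = 0) :
    Integrable (fun σ : ℝ => C S (σ ^ (1 / (2 * (t - 1))))) (volume.restrict (Ioo (0 : ℝ) 1)) := by
  have hp := prob_Ioo
  have hc : 0 < 1 / (2 * (t - 1)) := by
    have : 0 < t - 1 := by linarith
    positivity
  refine Integrable.of_bound (C := 1) ?_ ?_
  · refine ContinuousOn.aestronglyMeasurable ?_ measurableSet_Ioo
    intro σ hσ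
    have h := rpow_mem hc hσ
    have h1 := C_continuousAt S (by linarith) hμ h.1 h.2
    refine ContinuousAt.continuousWithinAt ?_
    exact ContinuousAt.comp (f := fun σ : ℝ => σ ^ (1 / (2 * (t - 1)))) h1
      (Real.continuousAt_rpow_const _ _ (Or.inl hσ.1.ne'))
  · filter_upwards [ae_restrict_mem measurableSet_Ioo] with σ hσ
    have h := rpow_mem hc hσ
    exact C_norm_le_one S (by linarith) hμ h.1.le h.2

lemma D_compact (ht : 1 < t) (hμ : μ (Ball N)ᶜ = 0) : IsCompactOperator (D S) := by
  have hp := prob_Ioo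
  have hc : 0 < 1 / (2 * (t - 1)) := by
    have : 0 < t - 1 := by linarith
    positivity
  have hcl : IsClosed {A : S.H →L[ℂ] S.H | IsCompactOperator A} :=
    isClosed_setOfPred_isCompactOperator
  have hcv : Convex ℝ {A : S.H →L[ℂ] S.H | IsCompactOperator A} := convex_compact
  have h : ∀ᵐ σ ∂(volume.restrict (Ioo (0 : ℝ) 1)), C S (σ ^ (1 / (2 * (t - 1)))) ∈
      {A : S.H →L[ℂ] S.H | IsCompactOperator A} := by
    filter_upwards [ae_restrict_mem measurableSet_Ioo] with σ hσ
    have h := rpow_mem hc hσ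
    exact C_compact S (by linarith) hμ h.1.le h.2
  exact hcv.integral_mem hcl h (D_int S ht hμ)

lemma cpow_deriv {x : ℂ} (hx : ‖x‖ < 1) (τ : ℝ) :
    HasDerivAt (fun y : ℂ => (1 - y) ^ (-((τ - 1 : ℝ) : ℂ)))
      ((τ - 1 : ℝ) * (1 - x) ^ (-(τ : ℂ))) x := by
  have h := ((hasDerivAt_id' x).const_sub 1).cpow_const (c := (-((τ - 1 : ℝ) : ℂ)))
    (slit_of_norm_lt hx)
  convert h using 1
  have : (-((τ - 1 : ℝ) : ℂ)) - 1 = -(τ : ℂ) := by push_cast; ring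
  rw [this]
  ring

lemma ftc (ht : 1 < t) {x : ℂ} (hx : ‖x‖ < 1) :
    ∫ σ in Ioo (0 : ℝ) 1, (1 - ((σ ^ (1 / (t - 1)) : ℝ) : ℂ) * x) ^ (-(t : ℂ))
      = (1 - x) ^ (-((t - 1 : ℝ) : ℂ)) := by
  have ht' : 0 < t - 1 := by linarith
  set a := 1 / (t - 1) with ha
  have ha0 : 0 < a := by positivity
  have hlt : ∀ σ ∈ Icc (0 : ℝ) 1, ‖((σ ^ a : ℝ) : ℂ) * x‖ < 1 := by
    intro σ hσ
    rw [norm_mul, Complex.norm_real, Real.norm_of_nonneg (Real.rpow_nonneg hσ.1 _)]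
    exact (mul_le_of_le_one_left (norm_nonneg _) (Real.rpow_le_one hσ.1 hσ.2 ha0.le)).trans_lt hx
  have hc0 : Continuous fun σ : ℝ => ((σ ^ a : ℝ) : ℂ) :=
    Complex.continuous_ofReal.comp (Real.continuous_rpow_const ha0.le)
  have hcont : ∀ c : ℂ, ContinuousOn (fun σ : ℝ => (1 - ((σ ^ a : ℝ) : ℂ) * x) ^ c) (Icc 0 1) := by
    intro c
    refine ContinuousOn.cpow (continuous_const.sub (hc0.mul continuous_const)).continuousOn
      continuousOn_const fun σ hσ => ?_
    exact slit_of_norm_lt (hlt σ hσ)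
  rw [← integral_Ioc_eq_integral_Ioo, ← intervalIntegral.integral_of_le zero_le_one]
  rw [intervalIntegral.integral_eq_sub_of_hasDerivAt_of_le zero_le_one
    (f := fun σ : ℝ => (σ : ℂ) * (1 - ((σ ^ a : ℝ) : ℂ) * x) ^ (-((t - 1 : ℝ) : ℂ)))]
  · simp
  · exact Complex.continuous_ofReal.continuousOn.mul (hcont _)
  · intro σ hσ
    have hσ' : σ ∈ Icc (0 : ℝ) 1 := ⟨hσ.1.le, hσ.2.le⟩
    have h1 : HasDerivAt (fun σ : ℝ => ((σ ^ a : ℝ) : ℂ) * x)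
        (((a * σ ^ (a - 1) : ℝ) : ℂ) * x) σ :=
      ((Real.hasDerivAt_rpow_const (Or.inl hσ.1.ne')).ofReal_comp).mul_const x
    have h2 := HasDerivAt.scomp σ (cpow_deriv (hlt σ hσ') t) h1
    have h3 := (Complex.ofRealCLM.hasDerivAt (x := σ)).mul h2
    refine HasDerivAt.congr_deriv h3 ?_
    simp only [Complex.ofRealCLM_apply, Function.comp_apply, Complex.ofReal_one, one_mul,
      smul_eq_mul]
    set X := ((σ ^ a : ℝ) : ℂ) * x with hX
    have hne : 1 - X ≠ 0 := Complex.slitPlane_ne_zero (slit_of_norm_lt (hlt σ hσ'))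
    have e1 : (1 - X) ^ (-((t - 1 : ℝ) : ℂ)) = (1 - X) ^ (-(t : ℂ)) * (1 - X) := by
      rw [show (-((t - 1 : ℝ) : ℂ)) = -(t : ℂ) + 1 by push_cast; ring,
        Complex.cpow_add _ _ hne, Complex.cpow_one]
    have e2 : (σ : ℂ) * (((a * σ ^ (a - 1) : ℝ) : ℂ) * x * ((t - 1 : ℝ) * (1 - X) ^ (-(t : ℂ))))
        = X * (1 - X) ^ (-(t : ℂ)) := by
      have : σ * (a * σ ^ (a - 1)) * (t - 1) = σ ^ a := by
        have h5 : σ * σ ^ (a - 1) = σ ^ a := by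
          rw [Real.rpow_sub_one hσ.1.ne']
          field_simp [hσ.1.ne']
        have h6 : a * (t - 1) = 1 := by rw [ha]; field_simp
        calc σ * (a * σ ^ (a - 1)) * (t - 1) = (a * (t - 1)) * (σ * σ ^ (a - 1)) := by ring
          _ = σ ^ a := by rw [h5, h6, one_mul]
      rw [hX, ← this]
      push_cast
      ring
    rw [e1, e2]
    ring
  · refine ContinuousOn.intervalIntegrable ?_
    rw [uIcc_of_le zero_le_one]
    exact hcont _

lemma D_kernel (ht : 1 < t) (hμ : μ (Ball N)ᶜ = 0)
    {u w : EuclideanSpace ℂ (Fin N)} (hu : u ∈ Ball N) (hw : w ∈ Ball N) :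
    ⟪S.kernel u, D S (S.kernel w)⟫ = (1 - ⟪w, u⟫) ^ (-((t - 1 : ℝ) : ℂ)) := by
  have ht' : 0 < t - 1 := by linarith
  have hc : 0 < 1 / (2 * (t - 1)) := by positivity
  have hint := D_int S ht hμ
  rw [D, ContinuousLinearMap.integral_apply hint,
    ← integral_inner (hint.apply_continuousLinearMap _), ← ftc ht (inner_lt_one hw hu)]
  refine setIntegral_congr_fun measurableSet_Ioo fun σ hσ => ?_
  have h := rpow_mem hc hσ
  have e : (σ ^ (1 / (2 * (t - 1)))) ^ 2 = σ ^ (1 / (t - 1)) := by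
    rw [← Real.rpow_natCast, ← Real.rpow_mul hσ.1.le]
    congr 1
    push_cast
    field_simp
  have h' := rpow_mem (c := 1 / (t - 1)) (by positivity) hσ
  rw [C_kernel S (by linarith) hμ h.1.le h.2 hw, e,
    inner_kernel S (smul_mem_ball h'.1.le h'.2.le hw) hu, inner_rsmul_left]

lemma JD_coe (ht : 1 < t) (hμ : μ (Ball N)ᶜ = 0)
    {w : EuclideanSpace ℂ (Fin N)} (hw : w ∈ Ball N) :
    J S hμ (D S (S.kernel w)) =ᵐ[μ] fun z => (1 - ⟪w, z⟫) ^ (-((t - 1 : ℝ) : ℂ)) := by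
  filter_upwards [J_coe S hμ (D S (S.kernel w)), ae_ball hμ] with z h1 hz
  rw [h1, ← S.reproducing _ z hz, D_kernel S ht hμ hz hw]

lemma pert_deriv {x y : ℂ} {ε : ℝ} (h : ‖x + ε * y‖ < 1) (τ : ℝ) :
    HasDerivAt (fun ε : ℝ => (1 - (x + ε * y)) ^ (-((τ - 1 : ℝ) : ℂ)))
      ((τ - 1 : ℝ) * y * (1 - (x + ε * y)) ^ (-(τ : ℂ))) ε := by
  have h1 : HasDerivAt (fun ε : ℝ => x + ε * y) y ε := by
    simpa using ((Complex.ofRealCLM.hasDerivAt (x := ε)).mul_const y).const_add x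
  have h2 := HasDerivAt.scomp ε (cpow_deriv h τ) h1
  refine HasDerivAt.congr_deriv h2 ?_
  rw [smul_eq_mul]
  ring

lemma norm_coord_le (j : Fin N) {z : EuclideanSpace ℂ (Fin N)} (hz : z ∈ Ball N) : ‖z j‖ ≤ 1 :=
  (PiLp.norm_apply_le z j).trans (mem_ball_iff.1 hz).le

lemma memLp_of_cont (hμ : μ (Ball N)ᶜ = 0) {φ : EuclideanSpace ℂ (Fin N) → ℂ}
    (hφ : ContinuousOn φ (Ball N)) (M : ℝ) (hM : ∀ z ∈ Ball N, ‖φ z‖ ≤ M) : MemLp φ ⊤ μ :=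
  memLp_top_of_bound (aesm_of_continuousOn hμ hφ) M
    (by filter_upwards [ae_ball hμ] with z hz using hM z hz)

lemma coord_memLp (hμ : μ (Ball N)ᶜ = 0) (j : Fin N) :
    MemLp (fun z : EuclideanSpace ℂ (Fin N) => z j) ⊤ μ :=
  memLp_of_cont hμ (by fun_prop) 1 fun _ hz => norm_coord_le j hz

lemma key_deriv (ht : 1 < t) (hμ : μ (Ball N)ᶜ = 0) (g : Lp ℂ 2 μ) (j : Fin N)
    {w : EuclideanSpace ℂ (Fin N)} (hw : w ∈ Ball N) :
    HasDerivAt (fun ε : ℝ => ⟪g, J S hμ (D S (S.kernel (w + ε • EuclideanSpace.single j (1 : ℂ))))⟫)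
      ((t - 1 : ℝ) * ⟪g, Mul μ (fun z => z j) (J S hμ (S.kernel w))⟫) 0 := by
  have hp := isProb S hμ
  have hw' := mem_ball_iff.1 hw
  set δ := (1 - ‖w‖) / 2 with hδ
  have hδ0 : 0 < δ := by rw [hδ]; linarith
  have hinner : ∀ (ε : ℝ) (z : EuclideanSpace ℂ (Fin N)),
      ⟪w + ε • EuclideanSpace.single j (1 : ℂ), z⟫ = ⟪w, z⟫ + ε * z j := by
    intro ε z
    rw [inner_add_left, inner_rsmul_left, EuclideanSpace.inner_single_left]
    simp
  have hball : ∀ ε ∈ ball (0 : ℝ) δ, w + ε • EuclideanSpace.single j (1 : ℂ) ∈ Ball N := by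
    intro ε hε
    rw [mem_ball_iff]
    refine (norm_add_le _ _).trans_lt ?_
    rw [norm_smul, EuclideanSpace.norm_single, norm_one, mul_one]
    rw [mem_ball_zero_iff] at hε
    rw [hδ] at hε
    linarith
  have hlt : ∀ ε ∈ ball (0 : ℝ) δ, ∀ z ∈ Ball N, ‖⟪w, z⟫ + ε * z j‖ ≤ ‖w‖ + δ := by
    intro ε hε z hz
    refine (norm_add_le _ _).trans ?_
    rw [norm_mul, Complex.norm_real]
    rw [mem_ball_zero_iff] at hε
    have h1 := norm_inner_le_left (w := w) (mem_ball_iff.1 hz).le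
    have h2 := norm_coord_le j hz
    have h3 : ‖ε‖ * ‖z j‖ ≤ ‖ε‖ := mul_le_of_le_one_right (norm_nonneg _) h2
    linarith
  have hwd : ‖w‖ + δ < 1 := by rw [hδ]; linarith
  have hg1 : Integrable g μ := ((Lp.memLp g).mono_exponent one_le_two).integrable le_rfl
  have hgc : AEStronglyMeasurable (fun z => (starRingEnd ℂ) (g z)) μ :=
    Complex.continuous_conj.comp_aestronglyMeasurable hg1.1
  have hFm : ∀ ε ∈ ball (0 : ℝ) δ, ∀ c : ℂ, ContinuousOn
      (fun z : EuclideanSpace ℂ (Fin N) => (1 - (⟪w, z⟫ + ε * z j)) ^ c) (Ball N) := by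
    intro ε hε c
    refine ContinuousOn.cpow (by fun_prop) continuousOn_const fun z hz => ?_
    exact slit_of_norm_lt ((hlt ε hε z hz).trans_lt hwd)
  have h0 : (0 : ℝ) ∈ ball (0 : ℝ) δ := mem_ball_self hδ0
  have main := hasDerivAt_integral_of_dominated_loc_of_deriv_le (μ := μ) (𝕜 := ℝ) (x₀ := (0 : ℝ))
    (s := ball (0 : ℝ) δ)
    (F := fun ε z => (starRingEnd ℂ) (g z) * (1 - (⟪w, z⟫ + ε * z j)) ^ (-((t - 1 : ℝ) : ℂ)))
    (F' := fun ε z => (starRingEnd ℂ) (g z) *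
      ((t - 1 : ℝ) * z j * (1 - (⟪w, z⟫ + ε * z j)) ^ (-(t : ℂ))))
    (bound := fun z => ‖g z‖ * ((t - 1) * (1 - (‖w‖ + δ)) ^ (-t)))
    (ball_mem_nhds _ hδ0) ?_ ?_ ?_ ?_ ?_ ?_
  · have main := main.2
    have e2 : ∫ z, (starRingEnd ℂ) (g z) *
        ((t - 1 : ℝ) * z j * (1 - (⟪w, z⟫ + (0 : ℝ) * z j)) ^ (-(t : ℂ))) ∂μ
        = (t - 1 : ℝ) * ⟪g, Mul μ (fun z => z j) (J S hμ (S.kernel w))⟫ := by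
      rw [Mul_inner (coord_memLp hμ j), ← integral_const_mul]
      refine integral_congr_ae ?_
      filter_upwards [J_kernel_coe S hμ hw] with z hz
      rw [hz]
      simp only [Complex.ofReal_zero, zero_mul, add_zero]
      ring
    rw [e2] at main
    refine main.congr_of_eventuallyEq ?_
    filter_upwards [ball_mem_nhds _ hδ0] with ε hε
    rw [L2.inner_def]
    refine integral_congr_ae ?_
    filter_upwards [JD_coe S ht hμ (hball ε hε)] with z hz
    rw [hz, RCLike.inner_apply, hinner, mul_comm]
  · filter_upwards [ball_mem_nhds _ hδ0] with ε hε
    exact hgc.mul (aesm_of_continuousOn hμ (hFm ε hε _))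
  · refine Integrable.mono' (hg1.norm.mul_const ((1 - (‖w‖ + δ)) ^ (-(t - 1))))
      (hgc.mul (aesm_of_continuousOn hμ (hFm 0 h0 _))) ?_
    filter_upwards [ae_ball hμ] with z hz
    rw [norm_mul, RCLike.norm_conj]
    exact mul_le_mul_of_nonneg_left (cpow_bound hwd (hlt 0 h0 z hz) (by linarith)) (norm_nonneg _)
  · refine hgc.mul (aesm_of_continuousOn hμ ?_)
    exact ContinuousOn.mul (by fun_prop) (hFm 0 h0 _)
  · filter_upwards [ae_ball hμ] with z hz ε hε
    rw [norm_mul, RCLike.norm_conj, norm_mul, norm_mul, Complex.norm_real,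
      Real.norm_of_nonneg (by linarith : 0 ≤ t - 1)]
    refine mul_le_mul_of_nonneg_left ?_ (norm_nonneg _)
    refine mul_le_mul ?_ (cpow_bound hwd (hlt ε hε z hz) (by linarith)) (norm_nonneg _)
      (by linarith)
    exact mul_le_of_le_one_right (by linarith) (norm_coord_le j hz)
  · exact hg1.norm.mul_const _
  · filter_upwards [ae_ball hμ] with z hz ε hε
    exact (pert_deriv ((hlt ε hε z hz).trans_lt hwd) t).const_mul _

lemma mulz_inner (ht : 1 < t) (hμ : μ (Ball N)ᶜ = 0) (j : Fin N)
    {u w : EuclideanSpace ℂ (Fin N)} (hu : u ∈ Ball N) (hw : w ∈ Ball N) :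
    ⟪J S hμ (S.kernel u), Mul μ (fun z => z j) (J S hμ (S.kernel w))⟫
      = u j * ⟪S.kernel u, S.kernel w⟫ := by
  have h1 := key_deriv S ht hμ (J S hμ (S.kernel u)) j hw
  have h2 := pert_deriv (x := ⟪w, u⟫) (y := u j) (ε := 0)
    (by simpa using inner_lt_one hw hu) t
  have h3 := h1.unique (h2.congr_of_eventuallyEq ?_)
  · have hne : ((t - 1 : ℝ) : ℂ) ≠ 0 := by
      have : t - 1 ≠ 0 := by linarith
      exact_mod_cast this
    rw [inner_kernel S hw hu]
    apply mul_left_cancel₀ hne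
    rw [h3]
    simp only [Complex.ofReal_zero, zero_mul, add_zero]
    ring
  · have hc : ContinuousAt (fun ε : ℝ => w + ε • EuclideanSpace.single j (1 : ℂ)) 0 := by fun_prop
    have hev : ∀ᶠ ε : ℝ in 𝓝 0, w + ε • EuclideanSpace.single j (1 : ℂ) ∈ Ball N :=
      hc.eventually_mem (isOpen_ball.mem_nhds (by simpa using hw))
    filter_upwards [hev] with ε hε
    rw [J_inner S (by linarith) hμ, D_kernel S ht hμ hu hε, inner_add_left, inner_rsmul_left,
      EuclideanSpace.inner_single_left]
    simp


/-- The Hankel operator with symbol `φ`. -/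
def Hk (hμ : μ (Ball N)ᶜ = 0) (φ : EuclideanSpace ℂ (Fin N) → ℂ) : S.H →L[ℂ] Lp ℂ 2 μ :=
  (ContinuousLinearMap.id ℂ (Lp ℂ 2 μ) - J S hμ ∘L adjoint (J S hμ)) ∘L Mul μ φ ∘L J S hμ

lemma Hk_apply (hμ : μ (Ball N)ᶜ = 0) (φ : EuclideanSpace ℂ (Fin N) → ℂ) (f : S.H) :
    Hk S hμ φ f = Mul μ φ (J S hμ f) - J S hμ (adjoint (J S hμ) (Mul μ φ (J S hμ f))) := rfl

lemma JJ (ht : 0 ≤ t) (hμ : μ (Ball N)ᶜ = 0) (f : S.H) :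
    adjoint (J S hμ) (J S hμ f) = f :=
  congrArg (fun A : S.H →L[ℂ] S.H => A f) (J_isom S ht hμ)

lemma J_norm (ht : 0 ≤ t) (hμ : μ (Ball N)ᶜ = 0) (f : S.H) : ‖J S hμ f‖ = ‖f‖ := by
  have h := J_inner S ht hμ f f
  rw [inner_self_eq_norm_sq_to_K, inner_self_eq_norm_sq_to_K] at h
  have h2 : ‖J S hμ f‖ ^ 2 = ‖f‖ ^ 2 := by exact_mod_cast h
  exact (sq_eq_sq₀ (norm_nonneg _) (norm_nonneg _)).1 h2

lemma Q_norm_sq (ht : 0 ≤ t) (hμ : μ (Ball N)ᶜ = 0) (x : Lp ℂ 2 μ) :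
    ‖x - J S hμ (adjoint (J S hμ) x)‖ ^ 2 = ‖x‖ ^ 2 - ‖adjoint (J S hμ) x‖ ^ 2 := by
  rw [norm_sub_sq (𝕜 := ℂ), J_norm S ht hμ, ← adjoint_inner_left, inner_self_eq_norm_sq]
  ring

lemma Hk_coord (ht : 1 < t) (hμ : μ (Ball N)ᶜ = 0) (j : Fin N) :
    Hk S hμ (fun z => z j) = 0 := by
  refine clm_ext S fun w hw => ?_
  set v := Mul μ (fun z => z j) (J S hμ (S.kernel w)) with hv
  set g := v - J S hμ (adjoint (J S hμ) v) with hg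
  have ht0 : 0 ≤ t := by linarith
  have hJg : adjoint (J S hμ) g = 0 := by
    rw [hg, map_sub, JJ S ht0 hμ, sub_self]
  have hgx : ∀ x, ⟪g, J S hμ x⟫ = 0 := by
    intro x
    rw [← adjoint_inner_left, hJg, inner_zero_left]
  have h1 := key_deriv S ht hμ g j hw
  simp only [hgx] at h1
  have h2 := h1.unique (hasDerivAt_const (0 : ℝ) (0 : ℂ))
  have hne : ((t - 1 : ℝ) : ℂ) ≠ 0 := by
    have : t - 1 ≠ 0 := by linarith
    exact_mod_cast this
  have h3 : ⟪g, v⟫ = 0 := (mul_eq_zero.1 h2).resolve_left hne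
  have h4 : ⟪g, g⟫ = 0 := by
    conv_lhs => rw [hg, inner_sub_right, ← hg, hgx, h3]
    simp
  exact inner_self_eq_zero.1 h4

lemma conj_memLp (hμ : μ (Ball N)ᶜ = 0) (j : Fin N) :
    MemLp (fun z : EuclideanSpace ℂ (Fin N) => (starRingEnd ℂ) (z j)) ⊤ μ :=
  (coord_memLp hμ j).star

/-- The adjoint of multiplication by the `j`-th coordinate. -/
def Aj (hμ : μ (Ball N)ᶜ = 0) (j : Fin N) : S.H →L[ℂ] S.H :=
  adjoint (J S hμ) ∘L Mul μ (fun z => (starRingEnd ℂ) (z j)) ∘L J S hμ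

lemma Aj_kernel (ht : 1 < t) (hμ : μ (Ball N)ᶜ = 0) (j : Fin N)
    {w : EuclideanSpace ℂ (Fin N)} (hw : w ∈ Ball N) :
    Aj S hμ j (S.kernel w) = (starRingEnd ℂ) (w j) • S.kernel w := by
  refine eq_of_kernel S fun u hu => ?_
  have h := mulz_inner S ht hμ j hw hu
  rw [Aj, ContinuousLinearMap.comp_apply, adjoint_inner_right, ContinuousLinearMap.comp_apply,
    ← Mul_adjoint (coord_memLp hμ j), adjoint_inner_right, ← inner_conj_symm, h, inner_smul_right,
    map_mul, inner_conj_symm]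

lemma D_eq (ht : 1 < t) (hμ : μ (Ball N)ᶜ = 0) :
    D S = ContinuousLinearMap.id ℂ S.H - ∑ j, adjoint (Aj S hμ j) ∘L Aj S hμ j := by
  refine clm_ext' S fun u hu w hw => ?_
  rw [D_kernel S ht hμ hu hw, _root_.sub_apply, _root_.sum_apply,
    inner_sub_right, inner_sum, ContinuousLinearMap.id_apply]
  have h1 : ∀ j, ⟪S.kernel u, (adjoint (Aj S hμ j) ∘L Aj S hμ j) (S.kernel w)⟫
      = (starRingEnd ℂ) (w j) * u j * ⟪S.kernel u, S.kernel w⟫ := by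
    intro j
    rw [ContinuousLinearMap.comp_apply, adjoint_inner_right, Aj_kernel S ht hμ j hw,
      Aj_kernel S ht hμ j hu, inner_smul_left, inner_smul_right, Complex.conj_conj]
    ring
  have h2 : ⟪w, u⟫ = ∑ j, (starRingEnd ℂ) (w j) * u j := by
    rw [PiLp.inner_apply]
    refine Finset.sum_congr rfl fun j _ => ?_
    rw [RCLike.inner_apply, mul_comm]
  simp only [h1]
  rw [← Finset.sum_mul, ← h2, inner_kernel S hw hu]
  have hne : 1 - ⟪w, u⟫ ≠ 0 := Complex.slitPlane_ne_zero (slit_of_norm_lt (inner_lt_one hw hu))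
  rw [show (-((t - 1 : ℝ) : ℂ)) = -(t : ℂ) + 1 by push_cast; ring,
        Complex.cpow_add _ _ hne, Complex.cpow_one]
  ring

lemma norm_sq_L2 {α : Type*} [MeasurableSpace α] {ν : Measure α} (F : Lp ℂ 2 ν) :
    ‖F‖ ^ 2 = ∫ z, ‖F z‖ ^ 2 ∂ν := by
  have h : ((‖F‖ ^ 2 : ℝ) : ℂ) = ((∫ z, ‖F z‖ ^ 2 ∂ν : ℝ) : ℂ) := by
    rw [← integral_complex_ofReal]
    have := inner_self_eq_norm_sq_to_K (𝕜 := ℂ) F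
    push_cast
    refine Eq.trans this.symm ?_
    rw [L2.inner_def]
    refine integral_congr_ae (Eventually.of_forall fun z => ?_)
    exact inner_self_eq_norm_sq_to_K (𝕜 := ℂ) (F z)
  exact_mod_cast h

lemma sq_int {α : Type*} [MeasurableSpace α] {ν : Measure α} (F : Lp ℂ 2 ν) :
    Integrable (fun z => ‖F z‖ ^ 2) ν := (Lp.memLp F).integrable_norm_pow (by norm_num)

lemma sum_Mul (hμ : μ (Ball N)ᶜ = 0) (F : Lp ℂ 2 μ) :
    ∑ j, ‖Mul μ (fun z => (starRingEnd ℂ) (z j)) F‖ ^ 2 ≤ ‖F‖ ^ 2 := by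
  simp only [norm_sq_L2]
  rw [← integral_finsetSum _ fun j _ => sq_int _]
  refine integral_mono_ae (integrable_finsetSum _ fun j _ => sq_int _) (sq_int _) ?_
  have h : ∀ᵐ z ∂μ, ∀ j, Mul μ (fun z => (starRingEnd ℂ) (z j)) F z
      = (starRingEnd ℂ) (z j) * F z := by
    rw [ae_all_iff]
    exact fun j => Mul_coe (conj_memLp hμ j) F
  filter_upwards [h, ae_ball hμ] with z h hz
  simp only [h, norm_mul, mul_pow, RCLike.norm_conj]
  rw [← Finset.sum_mul, ← EuclideanSpace.norm_sq_eq]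
  have := mem_ball_iff.1 hz
  refine mul_le_of_le_one_left (sq_nonneg _) ?_
  exact pow_le_one₀ (norm_nonneg _) this.le

lemma Hk_conj_bound (ht : 1 < t) (hμ : μ (Ball N)ᶜ = 0) (j : Fin N) (f : S.H) :
    ‖Hk S hμ (fun z => (starRingEnd ℂ) (z j)) f‖ ^ 2 ≤ ‖f‖ * ‖D S f‖ := by
  have ht0 : 0 ≤ t := by linarith
  have h1 : ∀ i, ‖Hk S hμ (fun z => (starRingEnd ℂ) (z i)) f‖ ^ 2
      = ‖Mul μ (fun z => (starRingEnd ℂ) (z i)) (J S hμ f)‖ ^ 2 - ‖Aj S hμ i f‖ ^ 2 := by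
    intro i
    rw [Hk_apply, Q_norm_sq S ht0 hμ]
    rfl
  have h2 : ‖Hk S hμ (fun z => (starRingEnd ℂ) (z j)) f‖ ^ 2
      ≤ ∑ i, ‖Hk S hμ (fun z => (starRingEnd ℂ) (z i)) f‖ ^ 2 :=
    Finset.single_le_sum (f := fun i => ‖Hk S hμ (fun z => (starRingEnd ℂ) (z i)) f‖ ^ 2)
      (fun i _ => sq_nonneg _) (Finset.mem_univ j)
  have h3 := sum_Mul hμ (J S hμ f)
  rw [J_norm S ht0 hμ] at h3
  have h4 : RCLike.re ⟪f, D S f⟫ = ‖f‖ ^ 2 - ∑ i, ‖Aj S hμ i f‖ ^ 2 := by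
    rw [D_eq S ht hμ, _root_.sub_apply, _root_.sum_apply,
      inner_sub_right, inner_sum, ContinuousLinearMap.id_apply, map_sub, map_sum,
      inner_self_eq_norm_sq]
    congr 1
    refine Finset.sum_congr rfl fun i _ => ?_
    rw [ContinuousLinearMap.comp_apply, adjoint_inner_right, inner_self_eq_norm_sq]
  have h5 : RCLike.re ⟪f, D S f⟫ ≤ ‖f‖ * ‖D S f‖ := re_inner_le_norm _ _
  simp only [h1, Finset.sum_sub_distrib] at h2
  rw [h1]
  linarith

lemma compact_of_bound {E F G : Type*} [NormedAddCommGroup E] [NormedSpace ℂ E]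
    [NormedAddCommGroup F] [NormedSpace ℂ F] [CompleteSpace F]
    [NormedAddCommGroup G] [NormedSpace ℂ G]
    (H : E →L[ℂ] F) (D : E →L[ℂ] G) (hD : IsCompactOperator D)
    (h : ∀ f, ‖H f‖ ^ 2 ≤ ‖f‖ * ‖D f‖) : IsCompactOperator H := by
  refine (isCompactOperator_iff_isCompact_closure_image_closedBall (H : E →ₗ[ℂ] F) zero_lt_one).2 ?_
  have hD' : IsCompact (closure (D '' closedBall 0 1)) :=
    (isCompactOperator_iff_isCompact_closure_image_closedBall (D : E →ₗ[ℂ] G) zero_lt_one).1 hD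
  refine TotallyBounded.isCompact_of_isClosed ?_ isClosed_closure
  refine TotallyBounded.closure ?_
  rw [Metric.totallyBounded_iff]
  intro ε hε
  have hT : TotallyBounded (D '' closedBall 0 1) := hD'.totallyBounded.subset subset_closure
  obtain ⟨T, hTs, hTf, hcov⟩ := Metric.finite_approx_of_totallyBounded hT (ε ^ 2 / 2)
    (by positivity)
  obtain ⟨Y, hY, hYf, rfl⟩ := Set.exists_subset_image_finite_and.1
    ⟨T, hTs, hTf, (rfl : T = T)⟩
  refine ⟨H '' Y, hYf.image _, ?_⟩
  rintro _ ⟨x, hx, rfl⟩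
  have hx' := hcov ⟨x, hx, rfl⟩
  simp only [mem_iUnion, exists_prop, mem_image, exists_exists_and_eq_and, mem_ball,
    dist_eq_norm] at hx' ⊢
  obtain ⟨y, hy, hxy⟩ := hx'
  refine ⟨y, hy, ?_⟩
  have h1 := h (x - y)
  rw [map_sub, map_sub] at h1
  have h2 : ‖x - y‖ ≤ 2 := by
    have a1 := mem_closedBall_zero_iff.1 hx
    have a2 := mem_closedBall_zero_iff.1 (hY hy)
    have := norm_sub_le x y
    linarith
  have h3 : ‖H x - H y‖ ^ 2 < ε ^ 2 := by
    have := mul_le_mul_of_nonneg_right h2 (norm_nonneg (D x - D y))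
    linarith
  exact lt_of_pow_lt_pow_left₀ 2 hε.le h3

lemma Hk_conj_compact (ht : 1 < t) (hμ : μ (Ball N)ᶜ = 0) (j : Fin N) :
    IsCompactOperator (Hk S hμ (fun z => (starRingEnd ℂ) (z j))) :=
  compact_of_bound _ _ (D_compact S ht hμ) (Hk_conj_bound S ht hμ j)

/-- The closed unit ball as a type. -/
abbrev CB (N : ℕ) : Type := Metric.closedBall (0 : EuclideanSpace ℂ (Fin N)) 1

open Classical in
/-- Extension by zero of a continuous function on the closed ball. -/
def ext0 (h : C(CB N, ℂ)) (z : EuclideanSpace ℂ (Fin N)) : ℂ :=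
  if hz : z ∈ closedBall (0 : EuclideanSpace ℂ (Fin N)) 1 then h ⟨z, hz⟩ else 0

lemma ext0_of_mem (h : C(CB N, ℂ)) {z : EuclideanSpace ℂ (Fin N)}
    (hz : z ∈ closedBall (0 : EuclideanSpace ℂ (Fin N)) 1) : ext0 h z = h ⟨z, hz⟩ := dif_pos hz

lemma ext0_norm_le (h : C(CB N, ℂ)) (z : EuclideanSpace ℂ (Fin N)) : ‖ext0 h z‖ ≤ ‖h‖ := by
  rw [ext0]
  split_ifs with hz
  · exact h.norm_coe_le_norm _
  · simp

lemma ext0_cont (h : C(CB N, ℂ)) : ContinuousOn (ext0 h) (Ball N) := by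
  refine ContinuousOn.mono ?_ ball_subset_closedBall
  rw [continuousOn_iff_continuous_restrict]
  convert h.continuous using 1
  ext z
  exact ext0_of_mem h z.2

lemma ext0_memLp (hμ : μ (Ball N)ᶜ = 0) (h : C(CB N, ℂ)) : MemLp (ext0 h) ⊤ μ :=
  memLp_of_cont hμ (ext0_cont h) ‖h‖ fun z _ => ext0_norm_le h z

lemma ae_cball (hμ : μ (Ball N)ᶜ = 0) :
    ∀ᵐ z ∂μ, z ∈ closedBall (0 : EuclideanSpace ℂ (Fin N)) 1 := by
  filter_upwards [ae_ball hμ] with z hz using ball_subset_closedBall hz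

/-- The coordinate functions. -/
def coord (j : Fin N) : C(CB N, ℂ) := ⟨fun z => z.1 j, by fun_prop⟩

lemma Hk_congr (hμ : μ (Ball N)ᶜ = 0) {φ ψ : EuclideanSpace ℂ (Fin N) → ℂ} (h : φ =ᵐ[μ] ψ) :
    Hk S hμ φ = Hk S hμ ψ := by
  rw [Hk, Hk, Mul_congr h]

lemma Hk_add (hμ : μ (Ball N)ᶜ = 0) (f g : C(CB N, ℂ)) :
    Hk S hμ (ext0 (f + g)) = Hk S hμ (ext0 f) + Hk S hμ (ext0 g) := by
  have h : ext0 (f + g) =ᵐ[μ] fun z => ext0 f z + ext0 g z := by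
    filter_upwards [ae_cball hμ] with z hz
    simp only [ext0_of_mem _ hz, ContinuousMap.add_apply]
  rw [Hk_congr S hμ h, Hk, Mul_add (ext0_memLp hμ f) (ext0_memLp hμ g),
    ContinuousLinearMap.add_comp, ContinuousLinearMap.comp_add]
  rfl

lemma Hk_sub (hμ : μ (Ball N)ᶜ = 0) (f g : C(CB N, ℂ)) :
    Hk S hμ (ext0 (f - g)) = Hk S hμ (ext0 f) - Hk S hμ (ext0 g) := by
  rw [eq_sub_iff_add_eq, ← Hk_add, sub_add_cancel]

lemma Hk_mul (hμ : μ (Ball N)ᶜ = 0) (f g : C(CB N, ℂ)) :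
    Hk S hμ (ext0 (f * g)) = Hk S hμ (ext0 f) ∘L (adjoint (J S hμ) ∘L Mul μ (ext0 g) ∘L J S hμ)
      + ((ContinuousLinearMap.id ℂ (Lp ℂ 2 μ) - J S hμ ∘L adjoint (J S hμ)) ∘L Mul μ (ext0 f)) ∘L
        Hk S hμ (ext0 g) := by
  have h : ext0 (f * g) =ᵐ[μ] fun z => ext0 f z * ext0 g z := by
    filter_upwards [ae_cball hμ] with z hz
    simp only [ext0_of_mem _ hz, ContinuousMap.mul_apply]
  rw [Hk_congr S hμ h, Hk, Mul_mul (ext0_memLp hμ f) (ext0_memLp hμ g)]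
  ext1 x
  simp only [Hk, ContinuousLinearMap.comp_apply, _root_.add_apply, _root_.sub_apply,
    ContinuousLinearMap.id_apply, map_sub]
  abel

lemma Hk_const (ht : 0 ≤ t) (hμ : μ (Ball N)ᶜ = 0) (c : ℂ) :
    Hk S hμ (ext0 (algebraMap ℂ C(CB N, ℂ) c)) = 0 := by
  have h : ext0 (algebraMap ℂ C(CB N, ℂ) c) =ᵐ[μ] fun _ => c := by
    filter_upwards [ae_cball hμ] with z hz
    rw [ext0_of_mem _ hz]
    simp
  rw [Hk_congr S hμ h]
  ext1 x
  rw [Hk_apply, Mul_const, _root_.smul_apply, ContinuousLinearMap.id_apply, map_smul, JJ S ht hμ,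
    map_smul, sub_self]
  rfl

lemma Hk_norm_le (ht : 0 ≤ t) (hμ : μ (Ball N)ᶜ = 0) (f : C(CB N, ℂ)) :
    ‖Hk S hμ (ext0 f)‖ ≤ ‖f‖ := by
  refine ContinuousLinearMap.opNorm_le_bound _ (norm_nonneg _) fun x => ?_
  have h1 := Q_norm_sq S ht hμ (Mul μ (ext0 f) (J S hμ x))
  rw [← Hk_apply] at h1
  have h2 := Mul_norm_le (ext0_memLp hμ f)
    (Eventually.of_forall fun z => ext0_norm_le f z) (J S hμ x)
  rw [J_norm S ht hμ] at h2
  refine le_trans ?_ h2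
  refine le_of_sq_le_sq ?_ (norm_nonneg _)
  rw [h1]
  linarith [sq_nonneg ‖adjoint (J S hμ) (Mul μ (ext0 f) (J S hμ x))‖]

lemma Hk_ext_coord (ht : 1 < t) (hμ : μ (Ball N)ᶜ = 0) (j : Fin N) :
    Hk S hμ (ext0 (coord j)) = 0 := by
  rw [← Hk_coord S ht hμ j]
  refine Hk_congr S hμ ?_
  filter_upwards [ae_cball hμ] with z hz
  rw [ext0_of_mem _ hz]
  rfl

lemma Hk_ext_star_coord (ht : 1 < t) (hμ : μ (Ball N)ᶜ = 0) (j : Fin N) :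
    IsCompactOperator (Hk S hμ (ext0 (star (coord j)))) := by
  have h : Hk S hμ (ext0 (star (coord j))) = Hk S hμ (fun z => (starRingEnd ℂ) (z j)) := by
    refine Hk_congr S hμ ?_
    filter_upwards [ae_cball hμ] with z hz
    rw [ext0_of_mem _ hz]
    rfl
  rw [h]
  exact Hk_conj_compact S ht hμ j

lemma Hk_poly (ht0 : 0 ≤ t) (ht : ∀ _ : Fin N, 1 < t) (hμ : μ (Ball N)ᶜ = 0) (f : C(CB N, ℂ))
    (hf : f ∈ StarAlgebra.adjoin ℂ (range (coord (N := N)))) :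
    IsCompactOperator (Hk S hμ (ext0 f)) ∧ IsCompactOperator (Hk S hμ (ext0 (star f))) := by
  have hmul : ∀ f g : C(CB N, ℂ), IsCompactOperator (Hk S hμ (ext0 f)) →
      IsCompactOperator (Hk S hμ (ext0 g)) → IsCompactOperator (Hk S hμ (ext0 (f * g))) := by
    intro f g hf hg
    rw [Hk_mul]
    exact (hf.comp_clm (adjoint (J S hμ) ∘L Mul μ (ext0 g) ∘L J S hμ)).add (hg.clm_comp
      ((ContinuousLinearMap.id ℂ (Lp ℂ 2 μ) - J S hμ ∘L adjoint (J S hμ)) ∘L Mul μ (ext0 f)))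
  have hadd : ∀ f g : C(CB N, ℂ), IsCompactOperator (Hk S hμ (ext0 f)) →
      IsCompactOperator (Hk S hμ (ext0 g)) → IsCompactOperator (Hk S hμ (ext0 (f + g))) := by
    intro f g hf hg
    rw [Hk_add]
    exact hf.add hg
  have hzero : IsCompactOperator (0 : S.H →L[ℂ] Lp ℂ 2 μ) := isCompactOperator_zero
  induction hf using StarAlgebra.adjoin_induction with
  | mem x hx =>
    obtain ⟨j, rfl⟩ := hx
    refine ⟨?_, Hk_ext_star_coord S (ht j) hμ j⟩
    rw [Hk_ext_coord S (ht j) hμ]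
    exact hzero
  | algebraMap c =>
    refine ⟨?_, ?_⟩
    · rw [Hk_const S ht0 hμ]
      exact hzero
    · rw [← algebraMap_star_comm, Hk_const S ht0 hμ]
      exact hzero
  | add x y _ _ hx hy =>
    rw [star_add]
    exact ⟨hadd _ _ hx.1 hy.1, hadd _ _ hx.2 hy.2⟩
  | mul x y _ _ hx hy =>
    rw [star_mul]
    exact ⟨hmul _ _ hx.1 hy.1, hmul _ _ hy.2 hx.2⟩
  | star x _ hx =>
    rw [star_star]
    exact ⟨hx.2, hx.1⟩

lemma Hk_compact (ht0 : 0 ≤ t) (ht : ∀ _ : Fin N, 1 < t) (hμ : μ (Ball N)ᶜ = 0)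
    (f : C(CB N, ℂ)) : IsCompactOperator (Hk S hμ (ext0 f)) := by
  have htop := ContinuousMap.starSubalgebra_topologicalClosure_eq_top_of_separatesPoints
    (StarAlgebra.adjoin ℂ (range (coord (N := N)))) (by
      intro x y hxy
      have : ∃ j, x.1 j ≠ y.1 j := by
        by_contra! hcon
        exact hxy (Subtype.ext (by ext j; exact hcon j))
      obtain ⟨j, hj⟩ := this
      exact ⟨coord j, ⟨coord j, StarAlgebra.subset_adjoin ℂ _ ⟨j, rfl⟩, rfl⟩, hj⟩)
  have hf : f ∈ closure ((StarAlgebra.adjoin ℂ (range (coord (N := N))) :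
      StarSubalgebra ℂ C(CB N, ℂ)) : Set C(CB N, ℂ)) := by
    rw [← StarSubalgebra.topologicalClosure_coe, htop]
    trivial
  have hcont : Continuous fun f : C(CB N, ℂ) => Hk S hμ (ext0 f) := by
    refine LipschitzWith.continuous (K := 1) (LipschitzWith.of_dist_le_mul fun x y => ?_)
    rw [dist_eq_norm, dist_eq_norm, ← Hk_sub, NNReal.coe_one, one_mul]
    exact Hk_norm_le S ht0 hμ _
  have hcl : IsClosed {A : S.H →L[ℂ] Lp ℂ 2 μ | IsCompactOperator A} :=
    isClosed_setOfPred_isCompactOperator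
  exact (hcl.preimage hcont).closure_subset_iff.2
    (fun g hg => (Hk_poly S ht0 ht hμ g hg).1) hf

lemma toeplitz_compact (ht0 : 0 ≤ t) (ht : ∀ _ : Fin N, 1 < t) (hμ : μ (Ball N)ᶜ = 0)
    (b h : EuclideanSpace ℂ (Fin N) → ℂ)
    (hb : Measurable b) (hbb : ∃ M : ℝ, ∀ z ∈ Ball N, ‖b z‖ ≤ M)
    (hh : ContinuousOn h (Metric.closedBall 0 1))
    (Tb Th Tbh : S.H →L[ℂ] S.H)
    (hTb : S.IsToeplitzOperator b Tb) (hTh : S.IsToeplitzOperator h Th)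
    (hTbh : S.IsToeplitzOperator (fun z => b z * h z) Tbh) :
    IsCompactOperator ⇑(Tb.comp Th - Tbh) := by
  obtain ⟨M, hM⟩ := hbb
  have hbL : MemLp b ⊤ μ := memLp_top_of_bound hb.aestronglyMeasurable M
    (by filter_upwards [ae_ball hμ] with z hz using hM z hz)
  let h' : C(CB N, ℂ) := ⟨(closedBall (0 : EuclideanSpace ℂ (Fin N)) 1).restrict h, hh.restrict⟩
  have he : ext0 h' =ᵐ[μ] h := by
    filter_upwards [ae_cball hμ] with z hz
    rw [ext0_of_mem _ hz]
    rfl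
  have hhL : MemLp h ⊤ μ := (memLp_congr_ae he).1 (ext0_memLp hμ h')
  have hbhL : MemLp (fun z => b z * h z) ⊤ μ := hhL.mul hbL
  have hc := Hk_compact S ht0 ht hμ h'
  rw [Hk_congr S hμ he] at hc
  have e : Tb.comp Th - Tbh = -((adjoint (J S hμ) ∘L Mul μ b) ∘L Hk S hμ h) := by
    rw [toeplitz_eq S ht0 hμ hbL hTb, toeplitz_eq S ht0 hμ hhL hTh,
      toeplitz_eq S ht0 hμ hbhL hTbh, Mul_mul hbL hhL]
    ext1 x
    simp only [Hk, ContinuousLinearMap.comp_apply, _root_.neg_apply, _root_.sub_apply,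
      ContinuousLinearMap.id_apply, map_sub]
    abel
  rw [e]
  exact (hc.clm_comp (adjoint (J S hμ) ∘L Mul μ b)).neg

lemma bergman_ball (N : ℕ) (s : ℝ) : bergmanMeasure N s (Ball N)ᶜ = 0 := by
  refine withDensity_absolutelyContinuous _ _ ?_
  rw [ballMeasure, Measure.smul_apply, Measure.restrict_apply measurableSet_ball.compl]
  simp

end ToeplitzAux

/-- Let `s > -1`, let `b` be a bounded measurable function on the unit
ball `B_N`, and let `h` be continuous on the closed ball.  Then `T_b T_h - T_{bh}` is a
compact operator on the weighted Bergman space `A²_s(B_N)`. -/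
theorem toeplitz_semimultiplicative_compact_bergman
    (N : ℕ) (s : ℝ) (hs : -1 < s)
    (S : BallFunctionSpace N (N + s + 1) (bergmanMeasure N s))
    (b h : EuclideanSpace ℂ (Fin N) → ℂ)
    (hb : Measurable b) (hbb : ∃ M : ℝ, ∀ z ∈ Ball N, ‖b z‖ ≤ M)
    (hh : ContinuousOn h (Metric.closedBall 0 1))
    (Tb Th Tbh : S.H →L[ℂ] S.H)
    (hTb : S.IsToeplitzOperator b Tb) (hTh : S.IsToeplitzOperator h Th)
    (hTbh : S.IsToeplitzOperator (fun z => b z * h z) Tbh) :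
    IsCompactOperator ⇑(Tb.comp Th - Tbh) := by
  refine ToeplitzAux.toeplitz_compact S ?_ ?_ (ToeplitzAux.bergman_ball N s) b h hb hbb hh Tb Th Tbh
    hTb hTh hTbh
  · have : (0 : ℝ) ≤ N := N.cast_nonneg
    linarith
  · intro j
    have : (1 : ℝ) ≤ N := by exact_mod_cast (Fin.pos j)
    linarith
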